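/- For every integer s ≥ 1 there exists a constant c > 0, depending only on s, such that for every 2π-periodic function g : ℝ → ℂ of class C^s, every even integer N ≥ 2 (with h = 2π/N), and every grid index i ∈ {−N/2+1, …, N/2}, the alternate-point trapezoidal rule satisfies |2h Σ_{j=−N/2+1, (j−i) odd}^{N/2} g(α_j) − ∫_{−π}^{π} g(α) dα| ≤ c h^s ‖g‖_s, where the sum is over those j ∈ {−N/2+1, …, N/2} for which j − i is odd. -/

import Mathlib

open scoped BigOperators
open Finset

noncomputable section

/-- Grid spacing `h = 2π/N`. -/
def hgrid (N : ℤ) : ℝ := 2 * Real.pi / N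

/-- Grid points `α_j = j h`. -/
def gridPt (N : ℤ) (j : ℤ) : ℝ := j * hgrid N

/-- Index set `{-N/2+1, …, N/2}`. -/
def idxs (N : ℤ) : Finset ℤ := Finset.Icc (-(N / 2) + 1) (N / 2)

/-- Discrete Fourier coefficient `f̂_k`. -/
def dft (N : ℤ) (f : ℤ → ℂ) (k : ℤ) : ℂ :=
  (N : ℂ)⁻¹ * ∑ j ∈ idxs N, f j * Complex.exp (-(Complex.I * (k : ℂ) * (gridPt N j : ℂ)))

/-- Reconstruction of a discrete function from Fourier coefficients. -/
def idft (N : ℤ) (c : ℤ → ℂ) (j : ℤ) : ℂ :=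
  ∑ k ∈ idxs N, c k * Complex.exp (Complex.I * (k : ℂ) * (gridPt N j : ℂ))

/-- The pseudo-spectral derivative `S_h`. -/
def Sh (N : ℤ) (f : ℤ → ℂ) : ℤ → ℂ :=
  idft N fun k => if k = N / 2 then 0 else Complex.I * (k : ℂ) * dft N f k

/-- The pseudo-spectral antiderivative `S_h⁻¹`. -/
def Shinv (N : ℤ) (f : ℤ → ℂ) : ℤ → ℂ :=
  idft N fun k => if k = 0 then 0 else dft N f k / (Complex.I * (k : ℂ))

/-- The filtered discrete function `f^p`. -/
def filterP (N : ℤ) (ρ : ℝ → ℝ) (f : ℤ → ℂ) : ℤ → ℂ :=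
  idft N fun k => (ρ (gridPt N k) : ℂ) * dft N f k

/-- The filtered derivative `D_h`. -/
def Dh (N : ℤ) (ρ : ℝ → ℝ) (f : ℤ → ℂ) : ℤ → ℂ :=
  idft N fun k => Complex.I * (k : ℂ) * (ρ (gridPt N k) : ℂ) * dft N f k

/-- Discrete `l²` norm. -/
def l2norm (N : ℤ) (f : ℤ → ℂ) : ℝ :=
  Real.sqrt (hgrid N * ∑ j ∈ idxs N, norm (f j) ^ 2)

/-- Discrete Hilbert transform `H_h`. -/
def Hh (N : ℤ) (f : ℤ → ℂ) (i : ℤ) : ℂ :=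
  ((hgrid N / Real.pi : ℝ) : ℂ) *
    ∑ j ∈ (idxs N).filter (fun j => Odd (j - i)),
      f j * (Real.cot ((gridPt N i - gridPt N j) / 2) : ℂ)

/-- Discrete inner product `(f,g)_h`. -/
def dip (N : ℤ) (f g : ℤ → ℂ) : ℂ :=
  (hgrid N : ℂ) * ∑ j ∈ idxs N, (starRingEnd ℂ) (f j) * g j

/-- Discrete mean `⟨f⟩_h`. -/
def dmean (N : ℤ) (f : ℤ → ℂ) : ℂ :=
  (N : ℂ)⁻¹ * ∑ j ∈ idxs N, f j

/-- The discrete function of samples of a periodic function. -/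
def samples (N : ℤ) (f : ℝ → ℂ) : ℤ → ℂ := fun j => f (gridPt N j)

/-- Fourier coefficient of a `2π`-periodic function. -/
def fourierCoeffP (f : ℝ → ℂ) (k : ℤ) : ℂ :=
  ((2 * Real.pi)⁻¹ : ℝ) * ∫ α in (-Real.pi)..Real.pi, f α * Complex.exp (-(Complex.I * (k : ℂ) * (α : ℂ)))

/-- Sobolev norm `‖f‖_s`. -/
def sobolevNorm (s : ℕ) (f : ℝ → ℂ) : ℝ :=
  Real.sqrt (∑' k : ℤ, (1 + (k : ℝ) ^ 2) ^ s * norm (fourierCoeffP f k) ^ 2)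

/-- A filter (cutoff) function for numerical filtering. -/
structure IsFilter (ρ : ℝ → ℝ) : Prop where
  even : ∀ x, ρ (-x) = ρ x
  nonneg : ∀ x, 0 ≤ ρ x
  smooth : ∃ r : ℕ, 2 < r ∧ ContDiff ℝ r ρ
  zero_at_pi : ρ Real.pi = 0
  zero_at_neg_pi : ρ (-Real.pi) = 0
  deriv_zero_at_pi : deriv ρ Real.pi = 0
  deriv_zero_at_neg_pi : deriv ρ (-Real.pi) = 0
  one_near_zero : ∃ μ : ℝ, 0 < μ ∧ μ < 1 ∧ ∀ x : ℝ, |x| ≤ μ * Real.pi → ρ x = 1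

/-- Cauchy–Schwarz for infinite series of nonnegative reals. -/
theorem summable_and_tsum_mul_le_sqrt_mul_sqrt {ι : Type*} {a b : ι → ℝ} (ha : ∀ i, 0 ≤ a i)
    (hb : ∀ i, 0 ≤ b i) (hsa : Summable fun i => a i ^ 2) (hsb : Summable fun i => b i ^ 2) :
    (Summable fun i => a i * b i) ∧
      ∑' i, a i * b i ≤ Real.sqrt (∑' i, a i ^ 2) * Real.sqrt (∑' i, b i ^ 2) := by
  have h := Real.summable_and_inner_le_Lp_mul_Lq_tsum_of_nonneg Real.HolderConjugate.two_two ha hb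
    (by simpa using hsa) (by simpa using hsb)
  simpa [Real.sqrt_eq_rpow] using h

theorem hasDerivAt_exp_neg_I_mul (k : ℤ) (x : ℝ) :
    HasDerivAt (fun α : ℝ => Complex.exp (-(Complex.I * (k : ℂ) * (α : ℂ))))
      (-(Complex.I * k) * Complex.exp (-(Complex.I * (k : ℂ) * (x : ℂ)))) x := by
  have h : HasDerivAt (fun α : ℝ => -(Complex.I * (k : ℂ) * (α : ℂ))) (-(Complex.I * k)) x := by
    simpa using! ((Complex.ofRealCLM.hasDerivAt (x := x)).const_mul (Complex.I * (k : ℂ))).neg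
  simpa [mul_comm] using h.cexp

theorem exp_neg_I_mul_pi (k : ℤ) :
    Complex.exp (-(Complex.I * (k : ℂ) * (Real.pi : ℂ))) =
      Complex.exp (-(Complex.I * (k : ℂ) * ((-Real.pi : ℝ) : ℂ))) := by
  rw [Complex.exp_eq_exp_iff_exists_int]
  refine ⟨-k, ?_⟩
  push_cast
  ring

theorem periodic_deriv {g : ℝ → ℂ} {T : ℝ} (hg : Function.Periodic g T) :
    Function.Periodic (deriv g) T := by
  intro x
  rw [← deriv_comp_add_const, funext hg]

theorem fourierCoeffP_deriv {g : ℝ → ℂ} (hg : Function.Periodic g (2 * Real.pi))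
    (hd : ContDiff ℝ 1 g) (k : ℤ) :
    fourierCoeffP (deriv g) k = Complex.I * k * fourierCoeffP g k := by
  have hparts := intervalIntegral.integral_mul_deriv_eq_deriv_mul
    (a := -Real.pi) (b := Real.pi)
    (fun x _ => hasDerivAt_exp_neg_I_mul k x)
    (fun x _ => (hd.differentiable one_ne_zero x).hasDerivAt)
    (Continuous.intervalIntegrable (by fun_prop) _ _)
    ((hd.continuous_deriv le_rfl).intervalIntegrable _ _)
  have hper : g Real.pi = g (-Real.pi) := by
    rw [← hg (-Real.pi)]
    congr 1
    ring
  rw [exp_neg_I_mul_pi, hper, sub_self, zero_sub, ← intervalIntegral.integral_neg] at hparts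
  have hmul : ∫ x in (-Real.pi)..Real.pi,
      -(-(Complex.I * k) * Complex.exp (-(Complex.I * (k : ℂ) * (x : ℂ))) * g x) =
      Complex.I * k * ∫ x in (-Real.pi)..Real.pi,
        g x * Complex.exp (-(Complex.I * (k : ℂ) * (x : ℂ))) := by
    rw [← intervalIntegral.integral_const_mul]
    congr 1
    ext x
    ring
  rw [hmul] at hparts
  simp only [fourierCoeffP]
  simp_rw [mul_comm (deriv g _)]
  rw [hparts]
  ring

/-- A continuous periodic function as a continuous map on the circle. -/
def circleLift {g : ℝ → ℂ} (hg : Function.Periodic g (2 * Real.pi)) (hc : Continuous g) :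
    C(AddCircle (2 * Real.pi), ℂ) :=
  ⟨hg.lift, continuous_coinduced_dom.mpr hc⟩

theorem circleLift_coe {g : ℝ → ℂ} (hg : Function.Periodic g (2 * Real.pi)) (hc : Continuous g)
    (x : ℝ) : circleLift hg hc (x : AddCircle (2 * Real.pi)) = g x := rfl

theorem fourier_two_pi_coe (k : ℤ) (x : ℝ) :
    fourier k (x : AddCircle (2 * Real.pi)) = Complex.exp (Complex.I * k * x) := by
  rw [fourier_coe_apply]
  congr 1
  have : (Real.pi : ℂ) ≠ 0 := by exact_mod_cast Real.pi_ne_zero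
  push_cast
  field_simp

theorem fourierCoeff_circleLift [Fact (0 < 2 * Real.pi)] {g : ℝ → ℂ}
    (hg : Function.Periodic g (2 * Real.pi)) (hc : Continuous g) (k : ℤ) :
    fourierCoeff (circleLift hg hc) k = fourierCoeffP g k := by
  rw [fourierCoeff_eq_intervalIntegral _ k (-Real.pi), fourierCoeffP,
    show -Real.pi + 2 * Real.pi = Real.pi by ring, Complex.real_smul, one_div]
  congr 1
  apply intervalIntegral.integral_congr
  intro x _
  simp only [circleLift_coe, fourier_two_pi_coe, smul_eq_mul]
  rw [mul_comm]
  push_cast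
  ring_nf

theorem summable_sq_fourierCoeffP {g : ℝ → ℂ} (hg : Function.Periodic g (2 * Real.pi))
    (hc : Continuous g) : Summable fun k : ℤ => ‖fourierCoeffP g k‖ ^ 2 := by
  have : Fact (0 < 2 * Real.pi) := ⟨Real.two_pi_pos⟩
  have h := (hasSum_sq_fourierCoeff
    (ContinuousMap.toLp 2 AddCircle.haarAddCircle ℂ (circleLift hg hc))).summable
  simpa only [fourierCoeff_toLp, fourierCoeff_circleLift] using h

theorem summable_pow_mul_sq_fourierCoeffP (s : ℕ) {g : ℝ → ℂ}
    (hg : Function.Periodic g (2 * Real.pi)) (hd : ContDiff ℝ s g) :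
    Summable fun k : ℤ => ((k : ℝ) ^ 2) ^ s * ‖fourierCoeffP g k‖ ^ 2 := by
  induction s generalizing g with
  | zero => simpa using summable_sq_fourierCoeffP hg hd.continuous
  | succ s ih =>
    have hd' : ContDiff ℝ (s + 1) g := by exact_mod_cast hd
    have h := ih (periodic_deriv hg) (contDiff_succ_iff_deriv.mp hd').2.2
    refine h.congr fun k => ?_
    rw [fourierCoeffP_deriv hg (hd.of_le (by exact_mod_cast Nat.succ_le_succ s.zero_le))]
    simp only [norm_mul, Complex.norm_I, one_mul, mul_pow, Complex.norm_intCast, sq_abs]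
    ring

theorem summable_sobolev (s : ℕ) {g : ℝ → ℂ} (hg : Function.Periodic g (2 * Real.pi))
    (hd : ContDiff ℝ s g) :
    Summable fun k : ℤ => (1 + (k : ℝ) ^ 2) ^ s * ‖fourierCoeffP g k‖ ^ 2 := by
  refine Summable.of_nonneg_of_le (fun k => by positivity) (fun k => ?_)
    (((summable_sq_fourierCoeffP hg hd.continuous).add
      (summable_pow_mul_sq_fourierCoeffP s hg hd)).mul_left (2 ^ (s - 1)))
  have h := add_pow_le (zero_le_one (α := ℝ)) (sq_nonneg (k : ℝ)) s
  rw [one_pow] at h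
  calc _ ≤ (2 ^ (s - 1) * (1 + ((k : ℝ) ^ 2) ^ s)) * ‖fourierCoeffP g k‖ ^ 2 := by gcongr
    _ = _ := by ring

theorem summable_fourierCoeffP {g : ℝ → ℂ} (hg : Function.Periodic g (2 * Real.pi))
    (hd : ContDiff ℝ 1 g) : Summable (fourierCoeffP g) := by
  have h1 : Summable fun k : ℤ => (|(k : ℝ)| * ‖fourierCoeffP g k‖) ^ 2 := by
    simpa [mul_pow] using summable_pow_mul_sq_fourierCoeffP 1 hg (by exact_mod_cast hd)
  have h2 : Summable fun k : ℤ => (|(k : ℝ)|⁻¹) ^ 2 := by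
    simpa using Real.summable_one_div_int_pow.mpr one_lt_two
  have h := (summable_and_tsum_mul_le_sqrt_mul_sqrt (fun k => by positivity)
    (fun k => by positivity) h1 h2).1
  refine Summable.of_norm_bounded_eventually h ?_
  refine (Set.finite_singleton (0 : ℤ)).subset fun k hk => ?_
  by_contra hk0
  have : |(k : ℝ)| ≠ 0 := by simpa using hk0
  apply hk
  show ‖fourierCoeffP g k‖ ≤ _
  field_simp
  exact le_rfl

theorem hasSum_fourierCoeffP {g : ℝ → ℂ} (hg : Function.Periodic g (2 * Real.pi))
    (hd : ContDiff ℝ 1 g) (x : ℝ) :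
    HasSum (fun k : ℤ => fourierCoeffP g k * Complex.exp (Complex.I * k * x)) (g x) := by
  have : Fact (0 < 2 * Real.pi) := ⟨Real.two_pi_pos⟩
  have hcoeff := fourierCoeff_circleLift hg hd.continuous
  have h := has_pointwise_sum_fourier_series_of_summable
    (f := circleLift hg hd.continuous)
    ((summable_fourierCoeffP hg hd).congr fun k => (hcoeff k).symm) x
  simpa only [hcoeff, fourier_two_pi_coe, smul_eq_mul, circleLift_coe] using h

/-- The alternate points form an arithmetic progression of step two. -/
theorem exists_sum_alternate_eq (M : ℕ) (i : ℤ) : ∃ j₀ : ℤ, ∀ f : ℤ → ℂ,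
    ∑ j ∈ (idxs (2 * (M : ℤ))).filter (fun j => Odd (j - i)), f j =
      ∑ l ∈ Finset.range M, f (j₀ + 2 * l) := by
  refine ⟨-M + 1 + (M + i) % 2, fun f => ?_⟩
  refine Finset.sum_nbij' (fun j => ((j + M - 1) / 2).toNat) (fun l => -M + 1 + (M + i) % 2 + 2 * l)
    ?_ ?_ ?_ ?_ ?_
  · intro j hj
    simp only [idxs, Finset.mem_filter, Finset.mem_Icc, Int.odd_iff, Finset.mem_range] at hj ⊢
    omega
  · intro l hl
    simp only [idxs, Finset.mem_filter, Finset.mem_Icc, Int.odd_iff, Finset.mem_range] at hl ⊢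
    omega
  · intro j hj
    simp only [idxs, Finset.mem_filter, Finset.mem_Icc, Int.odd_iff] at hj
    omega
  · intro l hl
    simp only [Finset.mem_range] at hl
    omega
  · intro j hj
    simp only [idxs, Finset.mem_filter, Finset.mem_Icc, Int.odd_iff] at hj
    congr 1
    omega

theorem hgrid_two_mul (M : ℕ) : hgrid (2 * (M : ℤ)) = Real.pi / M := by
  rw [hgrid]
  push_cast
  exact mul_div_mul_left _ _ two_ne_zero

/-- The exponentials of frequency not divisible by `M` are annihilated by the sum over `M`
equispaced points. -/
theorem sum_exp_eq_zero {M : ℕ} (hM : M ≠ 0) (j₀ : ℤ) {k : ℤ} (hk : ¬ (M : ℤ) ∣ k) :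
    ∑ l ∈ Finset.range M,
      Complex.exp (Complex.I * k * (gridPt (2 * (M : ℤ)) (j₀ + 2 * l) : ℝ)) = 0 := by
  have hMC : (M : ℂ) ≠ 0 := by exact_mod_cast hM
  set ζ : ℂ := Complex.exp (2 * Real.pi * Complex.I * k / M) with hζ
  have hterm : ∀ l : ℕ,
      Complex.exp (Complex.I * k * (gridPt (2 * (M : ℤ)) (j₀ + 2 * l) : ℝ)) =
        Complex.exp (Complex.I * k * (gridPt (2 * (M : ℤ)) j₀ : ℝ)) * ζ ^ l := by
    intro l
    rw [hζ, ← Complex.exp_nat_mul, ← Complex.exp_add]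
    congr 1
    simp only [gridPt, hgrid_two_mul]
    push_cast
    field_simp
  have hne : ζ ≠ 1 := by
    intro h
    obtain ⟨n, hn⟩ := Complex.exp_eq_one_iff.mp h
    have hpi : (Real.pi : ℂ) ≠ 0 := by exact_mod_cast Real.pi_ne_zero
    have hI := Complex.I_ne_zero
    field_simp at hn
    exact hk ⟨n, by exact_mod_cast hn⟩
  have hpow : ζ ^ M = 1 := by
    rw [hζ, ← Complex.exp_nat_mul, Complex.exp_eq_one_iff]
    exact ⟨k, by field_simp⟩
  simp_rw [hterm]
  rw [← Finset.mul_sum, geom_sum_eq hne, hpow, sub_self, zero_div, mul_zero]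

theorem norm_sum_exp_le (M : ℕ) (x : ℕ → ℝ) (k : ℤ) :
    ‖∑ l ∈ Finset.range M, Complex.exp (Complex.I * k * (x l : ℝ))‖ ≤ M := by
  refine (norm_sum_le _ _).trans_eq ?_
  have : ∀ l, ‖Complex.exp (Complex.I * k * (x l : ℝ))‖ = 1 := by
    intro l
    rw [show Complex.I * k * (x l : ℝ) = ((k * x l : ℝ) : ℂ) * Complex.I by push_cast; ring]
    exact Complex.norm_exp_ofReal_mul_I _
  simp [this]

/-- The aliased Fourier coefficients are controlled by the Sobolev norm. -/
theorem tsum_aliased_le (s : ℕ) (hs : 1 ≤ s) {g : ℝ → ℂ}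
    (hg : Function.Periodic g (2 * Real.pi)) (hd : ContDiff ℝ s g) {M : ℕ} (hM : M ≠ 0) :
    (Summable fun m : ℤ => if m = 0 then 0 else ‖fourierCoeffP g (m * M)‖) ∧
    ∑' m : ℤ, (if m = 0 then 0 else ‖fourierCoeffP g (m * M)‖) ≤
      Real.sqrt (∑' m : ℤ, 1 / (m : ℝ) ^ (2 * s)) * ((M : ℝ)⁻¹ ^ s * sobolevNorm s g) := by
  have hMR : (M : ℝ) ≠ 0 := by exact_mod_cast hM
  have hinj : Function.Injective fun m : ℤ => m * (M : ℤ) :=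
    mul_left_injective₀ (by exact_mod_cast hM)
  have hsob := summable_sobolev s hg hd
  have hle : ∀ m : ℤ, (|(m : ℝ) * M| ^ s * ‖fourierCoeffP g (m * M)‖) ^ 2 ≤
      (1 + ((m * M : ℤ) : ℝ) ^ 2) ^ s * ‖fourierCoeffP g (m * M)‖ ^ 2 := by
    intro m
    rw [mul_pow, ← pow_mul, mul_comm s, pow_mul, sq_abs]
    push_cast
    gcongr
    linarith
  have hsa : Summable fun m : ℤ => (|(m : ℝ) * M| ^ s * ‖fourierCoeffP g (m * M)‖) ^ 2 :=
    Summable.of_nonneg_of_le (fun m => by positivity) hle (hsob.comp_injective hinj)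
  have heq : ∀ m : ℤ, (|(m : ℝ)|⁻¹ ^ s) ^ 2 = 1 / (m : ℝ) ^ (2 * s) := by
    intro m
    rw [← pow_mul, mul_comm s, pow_mul, inv_pow, sq_abs, one_div, inv_pow, pow_mul]
  have hsb : Summable fun m : ℤ => (|(m : ℝ)|⁻¹ ^ s) ^ 2 := by
    simp_rw [heq]
    exact Real.summable_one_div_int_pow.mpr (by omega)
  obtain ⟨hsum, hcs⟩ := summable_and_tsum_mul_le_sqrt_mul_sqrt (fun m => by positivity)
    (fun m => by positivity) hsb hsa
  have hterm : ∀ m : ℤ, (if m = 0 then 0 else ‖fourierCoeffP g (m * M)‖) =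
      (M : ℝ)⁻¹ ^ s * (|(m : ℝ)|⁻¹ ^ s * (|(m : ℝ) * M| ^ s * ‖fourierCoeffP g (m * M)‖)) := by
    intro m
    split_ifs with h
    · simp [h, Nat.one_le_iff_ne_zero.mp hs]
    · have : |(m : ℝ)| ≠ 0 := by simpa using h
      rw [abs_mul, Nat.abs_cast, mul_pow, inv_pow, inv_pow]
      field_simp
  simp_rw [hterm]
  refine ⟨hsum.mul_left _, ?_⟩
  rw [tsum_mul_left, mul_left_comm]
  gcongr
  refine hcs.trans ?_
  simp_rw [heq]
  gcongr
  exact Real.sqrt_le_sqrt ((hsa.tsum_le_tsum hle (hsob.comp_injective hinj)).trans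
    (tsum_comp_le_tsum_of_inj hsob (fun k => by positivity) hinj))

theorem two_pi_mul_fourierCoeffP_zero (g : ℝ → ℂ) :
    2 * (Real.pi : ℂ) * fourierCoeffP g 0 = ∫ α in (-Real.pi)..Real.pi, g α := by
  have hpi : (Real.pi : ℂ) ≠ 0 := by exact_mod_cast Real.pi_ne_zero
  simp only [fourierCoeffP, Int.cast_zero, mul_zero, zero_mul, neg_zero, Complex.exp_zero, mul_one]
  push_cast
  field_simp

/-- The quadrature error of the rule with `M` equispaced points is bounded by the sum of the
moduli of the aliased Fourier coefficients. -/
theorem norm_quadrature_error_le {g : ℝ → ℂ} (hg : Function.Periodic g (2 * Real.pi))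
    (hd : ContDiff ℝ 1 g) {M : ℕ} (hM : M ≠ 0) (j₀ : ℤ)
    (hsum : Summable fun m : ℤ => if m = 0 then 0 else ‖fourierCoeffP g (m * M)‖) :
    ‖2 * (hgrid (2 * (M : ℤ)) : ℂ) *
        ∑ l ∈ Finset.range M, g (gridPt (2 * (M : ℤ)) (j₀ + 2 * l)) -
        ∫ α in (-Real.pi)..Real.pi, g α‖ ≤
      2 * Real.pi * ∑' m : ℤ, if m = 0 then 0 else ‖fourierCoeffP g (m * M)‖ := by
  have hMC : (M : ℂ) ≠ 0 := by exact_mod_cast hM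
  have hMR : (M : ℝ) ≠ 0 := by exact_mod_cast hM
  have hinj : Function.Injective fun m : ℤ => m * (M : ℤ) :=
    mul_left_injective₀ (by exact_mod_cast hM)
  set D : ℤ → ℂ := fun k => ∑ l ∈ Finset.range M,
    Complex.exp (Complex.I * k * (gridPt (2 * (M : ℤ)) (j₀ + 2 * l) : ℝ)) with hD
  have hfull : HasSum (fun k : ℤ => fourierCoeffP g k * D k)
      (∑ l ∈ Finset.range M, g (gridPt (2 * (M : ℤ)) (j₀ + 2 * l))) := by
    simp_rw [hD, Finset.mul_sum]
    exact hasSum_sum fun l _ => hasSum_fourierCoeffP hg hd _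
  have halias := (hinj.hasSum_iff (f := fun k : ℤ => fourierCoeffP g k * D k) (fun k hk => by
    simp only [hD]
    rw [sum_exp_eq_zero hM j₀ (fun ⟨n, hn⟩ => hk ⟨n, by simp [hn, mul_comm]⟩), mul_zero])).mpr hfull
  have hD0 : 2 * (hgrid (2 * (M : ℤ)) : ℂ) * (fourierCoeffP g 0 * D 0) =
      ∫ α in (-Real.pi)..Real.pi, g α := by
    rw [← two_pi_mul_fourierCoeffP_zero, hgrid_two_mul]
    simp only [hD, Int.cast_zero, mul_zero, zero_mul, Complex.exp_zero, Finset.sum_const,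
      Finset.card_range, nsmul_eq_mul, mul_one]
    push_cast
    field_simp
  have herr := (halias.mul_left (2 * (hgrid (2 * (M : ℤ)) : ℂ))).sub
    (hasSum_ite_eq (0 : ℤ) (∫ α in (-Real.pi)..Real.pi, g α))
  rw [← herr.tsum_eq, ← tsum_mul_left]
  refine tsum_of_norm_bounded (hsum.mul_left _).hasSum fun m => ?_
  by_cases hm : m = 0
  · simp [hm, hD0]
  · simp only [Function.comp_apply, hm, if_false, sub_zero, norm_mul, Complex.norm_ofNat]
    rw [hgrid_two_mul, Complex.norm_real, Real.norm_of_nonneg (by positivity)]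
    calc 2 * (Real.pi / M) * (‖fourierCoeffP g (m * M)‖ * ‖D (m * M)‖)
        ≤ 2 * (Real.pi / M) * (‖fourierCoeffP g (m * M)‖ * M) := by
          gcongr
          exact norm_sum_exp_le M _ _
      _ = 2 * Real.pi * ‖fourierCoeffP g (m * M)‖ := by field_simp

/-- spectral accuracy of the alternate-point trapezoidal rule for
smooth periodic functions. -/
theorem alternate_point_trapezoid_accuracy (s : ℕ) (hs : 1 ≤ s) :
    ∃ c : ℝ, 0 < c ∧ ∀ g : ℝ → ℂ, Function.Periodic g (2 * Real.pi) →
      ContDiff ℝ (s : ℕ) g →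
      ∀ N : ℤ, 2 ≤ N → Even N → ∀ i ∈ idxs N,
        norm (2 * (hgrid N : ℂ) *
            (∑ j ∈ (idxs N).filter (fun j => Odd (j - i)), g (gridPt N j)) -
            ∫ α in (-Real.pi)..Real.pi, g α) ≤
          c * hgrid N ^ s * sobolevNorm s g := by
  set C : ℝ := Real.sqrt (∑' m : ℤ, 1 / (m : ℝ) ^ (2 * s))
  refine ⟨2 * Real.pi * ((C + 1) * Real.pi⁻¹ ^ s), by positivity, ?_⟩
  intro g hg hd N hN hEven i _
  obtain ⟨M, rfl⟩ : ∃ M : ℕ, N = 2 * (M : ℤ) := by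
    obtain ⟨r, hr⟩ := hEven
    exact ⟨r.toNat, by omega⟩
  have hM : M ≠ 0 := by omega
  obtain ⟨j₀, hj₀⟩ := exists_sum_alternate_eq M i
  rw [hj₀ fun j => g (gridPt (2 * (M : ℤ)) j)]
  obtain ⟨hsum, hle⟩ := tsum_aliased_le s hs hg hd hM
  refine (norm_quadrature_error_le hg (hd.of_le (by exact_mod_cast hs)) hM j₀ hsum).trans ?_
  have hgridpow : Real.pi⁻¹ ^ s * hgrid (2 * (M : ℤ)) ^ s = (M : ℝ)⁻¹ ^ s := by
    rw [← mul_pow, hgrid_two_mul]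
    field_simp
  have hnonneg : 0 ≤ sobolevNorm s g := Real.sqrt_nonneg _
  calc _ ≤ 2 * Real.pi * (C * ((M : ℝ)⁻¹ ^ s * sobolevNorm s g)) := by gcongr
    _ ≤ 2 * Real.pi * ((C + 1) * ((M : ℝ)⁻¹ ^ s * sobolevNorm s g)) := by
      gcongr
      linarith
    _ = _ := by
      rw [← hgridpow]
      ring

end
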